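/- For every ν>0 and every palette 𝒫 there exist α>0, C>0 and N∈ℕ such that: if H is a 3-graph on n≥N vertices that α-almost satisfies 𝒫 and H is (d,η,ee)-dense for some d∈[0,1] and η>0, then d ≤ Λ^{ee}_𝒫 + Cη + ν. -/

import Mathlib

/-!
Deleting an `α`-fraction of the edges only worsens the error term of density, so one may assume
that `H` satisfies the palette outright, with an ordering and a colouring `φ` of pairs, and that
`η` is as small as desired (otherwise `Cη` exceeds the trivial bound `d ≤ 1`).

Split the ordered vertex set into many intervals and shrink them until every pair of parts is
*stable*: every colour has, robustly in all large sub-boxes, either density at least `ε` (the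
colours of the support of the pair) or density at most `ε₀` (`stabilize`). By Ramsey's theorem for
pairs (`ramsey_five`) there are five parts `A₀ < A₁ < A₂ < A₃ < A₄` all of whose pairs have the
same support `S`.

Density of `H` says that for all but few vertices `z` the link of `z` has density at least
`d - o(1)` on *every* large sub-box of `A₁ × A₃` (`few_atypical`). Stability allows to pick, one
after another, such typical vertices `z` in `A₂`, `A₀`, `A₄`, for all colours `a, b ∈ S`, and to
shrink `A₁ × A₃` to a box `Y × W` so that `z` sends colour `a` to all of `Y` and `b` to all of `W`
(`common_box`). Each edge of the link of `z` on `Y × W` then forces the colour of the pair to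
complete `a, b` to a palette triple, in the position given by `z` lying between, before or after
`Y` and `W`. Hence the colour densities of the single box `Y × W`, restricted to `S` and
normalized, form a weighting with `λ^{ee} ≥ d - ν` (`le_LambdaEE_of_box`).
-/

open Finset

/-- A 3-uniform hypergraph: a finite vertex set (of naturals) together with a set of
3-element subsets of it as edges. -/
structure ThreeGraph where
  verts : Finset ℕ
  edges : Finset (Finset ℕ)
  edge_sub : ∀ e ∈ edges, e ⊆ verts
  edge_card : ∀ e ∈ edges, e.card = 3

/-- `F` occurs as a subhypergraph of `H`. -/
def IsSubhypergraph (F H : ThreeGraph) : Prop :=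
  ∃ f : ℕ → ℕ, Set.InjOn f ↑F.verts ∧ (∀ v ∈ F.verts, f v ∈ H.verts) ∧
    ∀ e ∈ F.edges, e.image f ∈ H.edges

noncomputable section

/-- Number of triples `(x,y,z) ∈ X × Y × Z` with `{x,y,z}` an edge of `H`. -/
def eVVV (H : ThreeGraph) (X Y Z : Finset ℕ) : ℕ :=
  ((X ×ˢ Y ×ˢ Z).filter fun p => ({p.1, p.2.1, p.2.2} : Finset ℕ) ∈ H.edges).card

/-- `H` is `(d,η,▽)`-dense. -/
def IsDenseVVV (H : ThreeGraph) (d η : ℝ) : Prop :=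
  ∀ X Y Z : Finset ℕ, X ⊆ H.verts → Y ⊆ H.verts → Z ⊆ H.verts →
    (eVVV H X Y Z : ℝ) ≥ d * X.card * Y.card * Z.card - η * (H.verts.card : ℝ) ^ 3

/-- Number of ordered triples `(x,y,z)` with `x ∈ X`, `{y,z} ∈ P` and `{x,y,z}` an edge. -/
def eEV (H : ThreeGraph) (X : Finset ℕ) (P : Finset (Finset ℕ)) : ℕ :=
  ((X ×ˢ H.verts ×ˢ H.verts).filter fun p =>
    ({p.2.1, p.2.2} : Finset ℕ) ∈ P ∧ ({p.1, p.2.1, p.2.2} : Finset ℕ) ∈ H.edges).card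

/-- `H` is `(d,η,e↦v)`-dense. -/
def IsDenseEV (H : ThreeGraph) (d η : ℝ) : Prop :=
  ∀ (X : Finset ℕ) (P : Finset (Finset ℕ)), X ⊆ H.verts →
    (∀ p ∈ P, p ⊆ H.verts ∧ p.card = 2) →
    (eEV H X P : ℝ) ≥ d * X.card * P.card - η * (H.verts.card : ℝ) ^ 3

/-- `K_{ee}(P,Q)`: ordered triples `(x,y,z)` with `{x,y} ∈ P` and `{y,z} ∈ Q`. -/
def KEE (H : ThreeGraph) (P Q : Finset (Finset ℕ)) : Finset (ℕ × ℕ × ℕ) :=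
  (H.verts ×ˢ H.verts ×ˢ H.verts).filter fun p =>
    ({p.1, p.2.1} : Finset ℕ) ∈ P ∧ ({p.2.1, p.2.2} : Finset ℕ) ∈ Q

/-- Number of triples in `K_{ee}(P,Q)` forming an edge of `H`. -/
def eEE (H : ThreeGraph) (P Q : Finset (Finset ℕ)) : ℕ :=
  ((KEE H P Q).filter fun p => ({p.1, p.2.1, p.2.2} : Finset ℕ) ∈ H.edges).card

/-- `H` is `(d,η,ee)`-dense. -/
def IsDenseEE (H : ThreeGraph) (d η : ℝ) : Prop :=
  ∀ P Q : Finset (Finset ℕ),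
    (∀ p ∈ P, p ⊆ H.verts ∧ p.card = 2) → (∀ q ∈ Q, q ⊆ H.verts ∧ q.card = 2) →
    (eEE H P Q : ℝ) ≥ d * (KEE H P Q).card - η * (H.verts.card : ℝ) ^ 3

/-- The uniform Turán density `π_▽(𝓕)` of a family `𝓕` of 3-graphs. -/
def piVVV (𝓕 : Set ThreeGraph) : ℝ :=
  sSup {d : ℝ | 0 ≤ d ∧ d ≤ 1 ∧ ∀ η : ℝ, 0 < η → ∀ n : ℕ,
    ∃ H : ThreeGraph, n ≤ H.verts.card ∧ (∀ F ∈ 𝓕, ¬ IsSubhypergraph F H) ∧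
      IsDenseVVV H d η}

/-- The uniform Turán density `π_{e↦v}(𝓕)` of a family `𝓕` of 3-graphs. -/
def piEV (𝓕 : Set ThreeGraph) : ℝ :=
  sSup {d : ℝ | 0 ≤ d ∧ d ≤ 1 ∧ ∀ η : ℝ, 0 < η → ∀ n : ℕ,
    ∃ H : ThreeGraph, n ≤ H.verts.card ∧ (∀ F ∈ 𝓕, ¬ IsSubhypergraph F H) ∧
      IsDenseEV H d η}

/-- The uniform Turán density `π_{ee}(𝓕)` of a family `𝓕` of 3-graphs. -/
def piEE (𝓕 : Set ThreeGraph) : ℝ :=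
  sSup {d : ℝ | 0 ≤ d ∧ d ≤ 1 ∧ ∀ η : ℝ, 0 < η → ∀ n : ℕ,
    ∃ H : ThreeGraph, n ≤ H.verts.card ∧ (∀ F ∈ 𝓕, ¬ IsSubhypergraph F H) ∧
      IsDenseEE H d η}

/-- A palette: a finite set of ordered triples of natural numbers (colours). -/
abbrev Palette := Finset (ℕ × ℕ × ℕ)

/-- The set of colours `Φ(𝒫)` of a palette. -/
def palColours (P : Palette) : Finset ℕ :=
  P.image (·.1) ∪ P.image (·.2.1) ∪ P.image (·.2.2)

/-- A weighting of a palette: nonnegative weights on the colours summing to 1. -/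
def IsWeighting (P : Palette) (x : ℕ → ℝ) : Prop :=
  (∀ a ∈ palColours P, 0 ≤ x a) ∧ ∑ a ∈ palColours P, x a = 1

/-- `λ^▽_𝒫(x) = Σ_{(a,b,c) ∈ 𝒫} x_a x_b x_c`. -/
def lamVVV (P : Palette) (x : ℕ → ℝ) : ℝ :=
  ∑ p ∈ P, x p.1 * x p.2.1 * x p.2.2

/-- The palette Lagrangian `Λ^▽_𝒫`. -/
def LambdaVVV (P : Palette) : ℝ :=
  sSup {l : ℝ | ∃ x : ℕ → ℝ, IsWeighting P x ∧ l = lamVVV P x}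

/-- The ordered degree Lagrangian `λ^a_𝒫(x)`. -/
def lamDeg (P : Palette) (a : ℕ) (x : ℕ → ℝ) : ℝ :=
  min (min (∑ p ∈ P.filter (fun p => p.1 = a), x p.2.1 * x p.2.2)
           (∑ p ∈ P.filter (fun p => p.2.1 = a), x p.1 * x p.2.2))
      (∑ p ∈ P.filter (fun p => p.2.2 = a), x p.1 * x p.2.1)

/-- `λ^{e↦v}_𝒫(x)`: minimum of `λ^a_𝒫(x)` over colours `a` with positive weight. -/
def lamEV (P : Palette) (x : ℕ → ℝ) : ℝ :=
  sInf {l : ℝ | ∃ a ∈ palColours P, 0 < x a ∧ l = lamDeg P a x}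

/-- The palette Lagrangian `Λ^{e↦v}_𝒫`. -/
def LambdaEV (P : Palette) : ℝ :=
  sSup {l : ℝ | ∃ x : ℕ → ℝ, IsWeighting P x ∧ l = lamEV P x}

/-- The ordered codegree Lagrangian `λ^{a,b}_𝒫(x)`. -/
def lamCodeg (P : Palette) (a b : ℕ) (x : ℕ → ℝ) : ℝ :=
  min (min (min (∑ p ∈ P.filter (fun p => p.1 = a ∧ p.2.1 = b), x p.2.2)
                (∑ p ∈ P.filter (fun p => p.1 = b ∧ p.2.1 = a), x p.2.2))
           (min (∑ p ∈ P.filter (fun p => p.1 = a ∧ p.2.2 = b), x p.2.1)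
                (∑ p ∈ P.filter (fun p => p.1 = b ∧ p.2.2 = a), x p.2.1)))
      (min (∑ p ∈ P.filter (fun p => p.2.1 = a ∧ p.2.2 = b), x p.1)
           (∑ p ∈ P.filter (fun p => p.2.1 = b ∧ p.2.2 = a), x p.1))

/-- `λ^{ee}_𝒫(x)`: minimum of `λ^{a,b}_𝒫(x)` over colours `a,b` with positive weight. -/
def lamEE (P : Palette) (x : ℕ → ℝ) : ℝ :=
  sInf {l : ℝ | ∃ a ∈ palColours P, ∃ b ∈ palColours P, 0 < x a * x b ∧ l = lamCodeg P a b x}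

/-- The palette Lagrangian `Λ^{ee}_𝒫`. -/
def LambdaEE (P : Palette) : ℝ :=
  sSup {l : ℝ | ∃ x : ℕ → ℝ, IsWeighting P x ∧ l = lamEE P x}

/-- A 3-graph `H` satisfies a palette `P`: there is an ordering of the vertices (an
injection `ord` into `ℕ`) and a colouring `φ` of the pairs of vertices with colours in
`Φ(P)` such that the ordered shadow of every edge is a triple of the palette. -/
def Satisfies (H : ThreeGraph) (P : Palette) : Prop :=
  ∃ (ord : ℕ → ℕ) (φ : Finset ℕ → ℕ),
    Set.InjOn ord ↑H.verts ∧
    (∀ u ∈ H.verts, ∀ v ∈ H.verts, u ≠ v → φ {u, v} ∈ palColours P) ∧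
    ∀ u v w : ℕ, ({u, v, w} : Finset ℕ) ∈ H.edges →
      ord u < ord v → ord v < ord w →
      (φ {u, v}, φ {v, w}, φ {u, w}) ∈ P

/-- Delete a set of edges from a 3-graph. -/
def ThreeGraph.deleteEdges (H : ThreeGraph) (R : Finset (Finset ℕ)) : ThreeGraph where
  verts := H.verts
  edges := H.edges \ R
  edge_sub := fun e he => H.edge_sub e (Finset.mem_sdiff.mp he).1
  edge_card := fun e he => H.edge_card e (Finset.mem_sdiff.mp he).1

/-- `H` α-almost satisfies `P`: one can remove at most `α·|V(H)|³` edges so that the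
resulting 3-graph satisfies `P`. -/
def AlmostSatisfies (H : ThreeGraph) (P : Palette) (α : ℝ) : Prop :=
  ∃ R ⊆ H.edges, (R.card : ℝ) ≤ α * (H.verts.card : ℝ) ^ 3 ∧
    Satisfies (H.deleteEdges R) P

/-- The Lagrange polynomial `λ_F(x) = 3! Σ_{e ∈ E(F)} Π_{v ∈ e} x_v` of a 3-graph. -/
def lagrangePoly (F : ThreeGraph) (x : ℕ → ℝ) : ℝ :=
  6 * ∑ e ∈ F.edges, ∏ v ∈ e, x v

/-- The Lagrangian `Λ_F` of a 3-graph: the supremum of the Lagrange polynomial over the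
standard simplex on the vertices. -/
def lagrangian (F : ThreeGraph) : ℝ :=
  sSup {l : ℝ | ∃ x : ℕ → ℝ, (∀ v ∈ F.verts, 0 ≤ x v ∧ x v ≤ 1) ∧
    (∑ v ∈ F.verts, x v = 1) ∧ l = lagrangePoly F x}

end

/-! ### Stable pairs of parts -/

/-- The number of pairs `(y, w) ∈ Y × W` whose colour `φ {y, w}` is `c`. -/
def colCount (φ : Finset ℕ → ℕ) (Y W : Finset ℕ) (c : ℕ) : ℕ :=
  ((Y ×ˢ W).filter fun p => φ {p.1, p.2} = c).card

lemma colCount_comm (φ : Finset ℕ → ℕ) (Y W : Finset ℕ) (c : ℕ) :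
    colCount φ Y W c = colCount φ W Y c := by
  unfold colCount
  refine Finset.card_bij' (fun p _ => (p.2, p.1)) (fun p _ => (p.2, p.1)) ?_ ?_
    (fun _ _ => rfl) (fun _ _ => rfl) <;>
  · intro p hp
    simp only [mem_filter, mem_product] at hp ⊢
    exact ⟨⟨hp.1.2, hp.1.1⟩, by rw [Finset.pair_comm]; exact hp.2⟩

lemma colCount_mono (φ : Finset ℕ → ℕ) {Y Y' W W' : Finset ℕ} (hY : Y' ⊆ Y) (hW : W' ⊆ W)
    (c : ℕ) : colCount φ Y' W' c ≤ colCount φ Y W c := by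
  unfold colCount
  exact card_le_card (filter_subset_filter _ (product_subset_product hY hW))

lemma colCount_eq_sum (φ : Finset ℕ → ℕ) (Y W : Finset ℕ) (c : ℕ) :
    colCount φ Y W c = ∑ y ∈ Y, (W.filter fun w => φ {y, w} = c).card := by
  unfold colCount
  simp only [card_filter, sum_product]

/-- The box `Y × W` is stable with support `S ⊆ Φ`: in every sub-box whose sides have relative
size at least `γ`, the colours of `S` have density at least `ε` and the other colours of `Φ`
have density at most `ε₀`. -/
def Stable (φ : Finset ℕ → ℕ) (Φ : Finset ℕ) (Y W S : Finset ℕ) (ε₀ ε γ : ℝ) : Prop :=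
  ∀ Y' ⊆ Y, ∀ W' ⊆ W, γ * Y.card ≤ Y'.card → γ * W.card ≤ W'.card → ∀ c ∈ Φ,
    (c ∈ S → ε * (Y'.card * W'.card) ≤ colCount φ Y' W' c) ∧
    (c ∉ S → (colCount φ Y' W' c : ℝ) ≤ ε₀ * (Y'.card * W'.card))

lemma Stable.symm {φ : Finset ℕ → ℕ} {Φ Y W S : Finset ℕ} {ε₀ ε γ : ℝ}
    (h : Stable φ Φ Y W S ε₀ ε γ) : Stable φ Φ W Y S ε₀ ε γ := by
  intro W' hW' Y' hY' h1 h2 c hc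
  have := h Y' hY' W' hW' h2 h1 c hc
  rw [colCount_comm, mul_comm (W'.card : ℝ)]
  exact this

/-- Parts can be shrunk by a bounded factor until all pairs are stable. If a pair is not stable,
some colour of its support is rare in a large sub-box; passing to that box removes the colour from
the support, so the process ends after at most `t` steps, `t` bounding the total size of the
supports. The thresholds decrease as `ε ↦ ε ^ (2 * L + 1)` going backwards through the steps, so
that a removed colour remains rare in all later boxes. -/
lemma stabilize (Φ : Finset ℕ) (m L : ℕ) (ε₀ : ℝ) (h0 : 0 < ε₀) (h1 : ε₀ ≤ 1) (t : ℕ) :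
    ∃ μ : ℝ, 0 < μ ∧ μ ≤ ε₀ ∧ ∀ (φ : Finset ℕ → ℕ) (V : ℕ → Finset ℕ) (S : ℕ → ℕ → Finset ℕ),
      ∑ i ∈ range m, ∑ j ∈ range m, (S i j).card < t →
      (∀ i j, i < j → j < m → ∀ c ∈ Φ, c ∉ S i j →
        (colCount φ (V i) (V j) c : ℝ) ≤ μ * ((V i).card * (V j).card)) →
      ∃ (ε : ℝ) (V' : ℕ → Finset ℕ) (S' : ℕ → ℕ → Finset ℕ), μ ≤ ε ∧ ε ≤ ε₀ ∧
        (∀ i, V' i ⊆ V i ∧ μ * (V i).card ≤ (V' i).card) ∧ (∀ i j, S' i j ⊆ S i j) ∧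
        ∀ i j, i < j → j < m → Stable φ Φ (V' i) (V' j) (S' i j) ε₀ ε (ε ^ L) := by
  induction t with
  | zero => exact ⟨ε₀, h0, le_rfl, fun φ V S h => absurd h (Nat.not_lt_zero _)⟩
  | succ t ih =>
    obtain ⟨ε, hε, hεε, H⟩ := ih
    have hε1 : ε ≤ 1 := hεε.trans h1
    have hL : 0 < ε ^ L := pow_pos hε L
    have hL1 : ε ^ L ≤ 1 := pow_le_one₀ hε.le hε1
    have e1 : ε ^ (2 * L + 1) = ε * (ε ^ L * ε ^ L) := by ring
    have hle : ε ^ (2 * L + 1) ≤ ε * ε ^ L := by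
      rw [e1]
      have : ε ^ L * ε ^ L ≤ ε ^ L := mul_le_of_le_one_left hL.le hL1
      gcongr
    have hle2 : ε ^ (2 * L + 1) ≤ ε := hle.trans (mul_le_of_le_one_right hε.le hL1)
    refine ⟨ε ^ (2 * L + 1), pow_pos hε _, hle2.trans hεε, fun φ V S hS hq => ?_⟩
    -- a colour outside the support stays rare, up to the factor `ε ^ (2 * L)`, in large sub-boxes
    have key : ∀ i j, i < j → j < m → ∀ c ∈ Φ, c ∉ S i j → ∀ Y ⊆ V i, ∀ W ⊆ V j,
        ε ^ L * (V i).card ≤ Y.card → ε ^ L * (V j).card ≤ W.card →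
        (colCount φ Y W c : ℝ) ≤ ε * (Y.card * W.card) := by
      intro i j hij hj c hc hcS Y hY W hW hYc hWc
      calc (colCount φ Y W c : ℝ) ≤ colCount φ (V i) (V j) c := by
            exact_mod_cast colCount_mono φ hY hW c
        _ ≤ ε ^ (2 * L + 1) * ((V i).card * (V j).card) := hq i j hij hj c hc hcS
        _ = ε * ((ε ^ L * (V i).card) * (ε ^ L * (V j).card)) := by rw [e1]; ring
        _ ≤ ε * (Y.card * W.card) := by gcongr
    by_cases hst : ∀ i j, i < j → j < m → Stable φ Φ (V i) (V j) (S i j) ε₀ ε (ε ^ L)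
    · refine ⟨ε, V, S, hle2, hεε, fun i => ⟨Subset.rfl, ?_⟩, fun _ _ => Subset.rfl, hst⟩
      exact mul_le_of_le_one_left (Nat.cast_nonneg _) (hle2.trans hε1)
    · unfold Stable at hst
      push Not at hst
      obtain ⟨i, j, hij, hj, Y, hY, W, hW, hYc, hWc, c, hc, hbad⟩ := hst
      have hcS : c ∈ S i j := by
        by_contra hcS
        have h2 := key i j hij hj c hc hcS Y hY W hW hYc hWc
        have h3 := hbad (fun h => absurd h hcS)
        have : ε * ((Y.card : ℝ) * W.card) ≤ ε₀ * (Y.card * W.card) := by gcongr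
        linarith [h3.2]
      have hlow : (colCount φ Y W c : ℝ) < ε * (Y.card * W.card) := by
        by_contra hcon
        exact (hbad (fun _ => not_lt.mp hcon)).1 hcS
      let V₁ : ℕ → Finset ℕ := fun k => if k = i then Y else if k = j then W else V k
      let S₁ : ℕ → ℕ → Finset ℕ := fun k l => if k = i ∧ l = j then (S i j).erase c else S k l
      have hV₁ : ∀ k, V₁ k ⊆ V k ∧ ε ^ L * (V k).card ≤ (V₁ k).card := by
        intro k
        by_cases hk : k = i
        · subst hk; simp only [V₁, if_true]; exact ⟨hY, hYc⟩
        · by_cases hk' : k = j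
          · subst hk'; simp only [V₁, hk, if_false, if_true]; exact ⟨hW, hWc⟩
          · simp only [V₁, hk, hk', if_false]
            exact ⟨Subset.rfl, mul_le_of_le_one_left (Nat.cast_nonneg _) hL1⟩
      have hS₁ : ∀ k l, S₁ k l ⊆ S k l := by
        intro k l
        by_cases h : k = i ∧ l = j
        · simp only [S₁, h, and_self, if_true]; exact erase_subset _ _
        · simp only [S₁, h, if_false]; exact Subset.rfl
      have hsum : ∑ k ∈ range m, ∑ l ∈ range m, (S₁ k l).card < t := by
        refine lt_of_lt_of_le ?_ (Nat.lt_succ_iff.mp hS)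
        refine sum_lt_sum (fun k _ => sum_le_sum fun l _ => card_le_card (hS₁ k l))
          ⟨i, mem_range.mpr (hij.trans hj), ?_⟩
        refine sum_lt_sum (fun l _ => card_le_card (hS₁ i l)) ⟨j, mem_range.mpr hj, ?_⟩
        simp only [S₁, and_self, if_true]
        exact card_erase_lt_of_mem hcS
      obtain ⟨ε', V', S', a1, a2, a3, a4, a5⟩ := H φ V₁ S₁ hsum (by
        intro k l hkl hl c' hc' hcS'
        by_cases h : c' ∈ S k l
        · have hkl' : k = i ∧ l = j ∧ c' = c := by
            by_cases h' : k = i ∧ l = j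
            · simp only [S₁, h', and_self, if_true, mem_erase, not_and] at hcS'
              refine ⟨h'.1, h'.2, ?_⟩
              by_contra hne
              exact hcS' hne (by rw [← h'.1, ← h'.2]; exact h)
            · simp only [S₁, h', if_false] at hcS'
              exact absurd h hcS'
          obtain ⟨rfl, rfl, rfl⟩ := hkl'
          simp only [V₁, if_true, hij.ne', if_false]
          exact hlow.le
        · exact key k l hkl hl c' hc' h _ (hV₁ k).1 _ (hV₁ l).1 (hV₁ k).2 (hV₁ l).2)
      refine ⟨ε', V', S', hle2.trans a1, a2, fun k => ⟨(a3 k).1.trans (hV₁ k).1, ?_⟩,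
        fun k l => (a4 k l).trans (hS₁ k l), a5⟩
      calc ε ^ (2 * L + 1) * ((V k).card : ℝ) ≤ ε * ε ^ L * (V k).card := by gcongr
        _ = ε * (ε ^ L * (V k).card) := by ring
        _ ≤ ε * (V₁ k).card := by gcongr; exact (hV₁ k).2
        _ ≤ _ := (a3 k).2

/-! ### Ramsey's theorem for pairs -/

/-- Along a nonprincipal ultrafilter every sequence with values in a finite type converges. -/
lemma hyperfilter_lim {κ : Type} [Finite κ] (g : ℕ → κ) :
    ∃ c, ∀ᶠ n in (Filter.hyperfilter ℕ : Filter ℕ), g n = c :=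
  Ultrafilter.eventually_exists_iff.mp (Filter.Eventually.of_forall fun n => ⟨g n, rfl⟩)

/-- The infinite Ramsey theorem for pairs: take limits of the colours along a nonprincipal
ultrafilter, first in the second coordinate and then in the first, and build the homogeneous
sequence greedily. -/
lemma ramsey_infinite {κ : Type} [Finite κ] (f : ℕ → ℕ → κ) :
    ∃ (c : κ) (i : ℕ → ℕ), ∀ k l, k < l → i k < i l ∧ f (i k) (i l) = c := by
  choose F hF using fun i => hyperfilter_lim (f i)
  obtain ⟨c, hc⟩ := hyperfilter_lim F
  obtain ⟨i, -, hi⟩ := exists_seq_of_forall_finset_exists (fun i => F i = c)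
    (fun i j => i < j ∧ f i j = c) (by
      intro s hs
      have h1 : ∀ᶠ j in (Filter.hyperfilter ℕ : Filter ℕ), ∀ x ∈ s, x < j ∧ f x j = c := by
        refine (Filter.eventually_all_finset s).mpr fun x hx => ?_
        rw [← hs x hx]
        have h0 : ∀ᶠ j in (Filter.hyperfilter ℕ : Filter ℕ), x < j :=
          Nat.hyperfilter_le_atTop (Filter.eventually_gt_atTop x)
        exact h0.and (hF x)
      exact (hc.and h1).exists)
  exact ⟨c, i, hi⟩

/-- The finite Ramsey theorem for homogeneous sets of size five, from the infinite one by a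
compactness argument: counterexamples `f m` on `{0, …, m - 1}` would have a limit. -/
lemma ramsey_five (κ : Type) [Finite κ] :
    ∃ m : ℕ, ∀ f : ℕ → ℕ → κ, ∃ (c : κ) (i : ℕ → ℕ), (∀ k < 5, i k < m) ∧
      ∀ k < 5, ∀ l < 5, k < l → i k < i l ∧ f (i k) (i l) = c := by
  by_contra hcon
  push Not at hcon
  choose f hf using hcon
  choose F hF using fun i j => hyperfilter_lim (fun m => f m i j)
  obtain ⟨c, i, hi⟩ := ramsey_infinite F
  have h1 : ∀ᶠ m in (Filter.hyperfilter ℕ : Filter ℕ), ∀ k ∈ range 5, ∀ l ∈ range 5,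
      f m (i k) (i l) = F (i k) (i l) :=
    (Filter.eventually_all_finset _).mpr fun k _ =>
      (Filter.eventually_all_finset _).mpr fun l _ => hF _ _
  have h2 : ∀ᶠ m in (Filter.hyperfilter ℕ : Filter ℕ), ∀ k ∈ range 5, i k < m :=
    (Filter.eventually_all_finset _).mpr fun k _ =>
      Nat.hyperfilter_le_atTop (Filter.eventually_gt_atTop _)
  obtain ⟨m, hm1, hm2⟩ := (h1.and h2).exists
  obtain ⟨k, hk, l, hl, hkl, hne⟩ := hf m c i (fun k hk => hm2 k (mem_range.mpr hk))
  exact hne (hi k l hkl).1 ((hm1 k (mem_range.mpr hk) l (mem_range.mpr hl)).trans (hi k l hkl).2)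

/-! ### Links and common neighbourhoods -/

lemma pair_eq {a b c d : ℕ} (h : ({a, b} : Finset ℕ) = {c, d}) :
    (a = c ∧ b = d) ∨ (a = d ∧ b = c) := by
  have h' := congrArg (fun s : Finset ℕ => (s : Set ℕ)) h
  simp only [coe_insert, coe_singleton] at h'
  exact Set.pair_eq_pair_iff.mp h'

/-- The number of edges `{y, z, w}` of `H` with `y ∈ Y` and `w ∈ W`, i.e. the number of pairs of
`Y × W` in the link of `z`. -/
def linkCount (H : ThreeGraph) (z : ℕ) (Y W : Finset ℕ) : ℕ :=
  ((Y ×ˢ W).filter fun p => ({p.1, z, p.2} : Finset ℕ) ∈ H.edges).card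

/-- For all but few `z ∈ C`, the link of `z` has density at least about `d` on every sub-box of
`B × D`. For each exceptional `z` take a violating sub-box `Y_z × W_z`, and apply density to the
pairs `{y, z}`, `y ∈ Y_z`, and the pairs `{z, w}`, `w ∈ W_z`. -/
lemma few_atypical (H : ThreeGraph) (d η δ : ℝ) (hH : IsDenseEE H d η) (B C D : Finset ℕ)
    (hB : B ⊆ H.verts) (hC : C ⊆ H.verts) (hD : D ⊆ H.verts)
    (hBC : Disjoint B C) (hBD : Disjoint B D) (hCD : Disjoint C D) :
    ∃ Z ⊆ C, Z.card * (δ * (B.card * D.card)) ≤ η * (H.verts.card : ℝ) ^ 3 ∧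
      ∀ z ∈ C, z ∉ Z → ∀ Y ⊆ B, ∀ W ⊆ D,
        d * (Y.card * W.card) - δ * (B.card * D.card) ≤ linkCount H z Y W := by
  classical
  let bad : ℕ → Prop := fun z => ∃ Y ⊆ B, ∃ W ⊆ D,
    (linkCount H z Y W : ℝ) < d * (Y.card * W.card) - δ * (B.card * D.card)
  have hch : ∀ z, ∃ Y W, Y ⊆ B ∧ W ⊆ D ∧ (bad z →
      (linkCount H z Y W : ℝ) < d * (Y.card * W.card) - δ * (B.card * D.card)) := by
    intro z
    by_cases hz : bad z
    · obtain ⟨Y, hY, W, hW, h⟩ := hz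
      exact ⟨Y, W, hY, hW, fun _ => h⟩
    · exact ⟨∅, ∅, empty_subset _, empty_subset _, fun h => absurd h hz⟩
  choose Yf Wf hYf hWf hlt using hch
  let Z := C.filter bad
  refine ⟨Z, filter_subset _ _, ?_, ?_⟩
  swap
  · intro z hz hzZ Y hY W hW
    by_contra hcon
    exact hzZ (mem_filter.mpr ⟨hz, Y, hY, W, hW, not_le.mp hcon⟩)
  let P : Finset (Finset ℕ) := Z.biUnion fun z => (Yf z).image fun y => {y, z}
  let Q : Finset (Finset ℕ) := Z.biUnion fun z => (Wf z).image fun w => {z, w}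
  have hZC : ∀ z ∈ Z, z ∈ C := fun z hz => (mem_filter.mp hz).1
  have hP : ∀ p ∈ P, p ⊆ H.verts ∧ p.card = 2 := by
    intro p hp
    obtain ⟨z, hz, hp⟩ := mem_biUnion.mp hp
    obtain ⟨y, hy, rfl⟩ := mem_image.mp hp
    refine ⟨?_, card_pair ?_⟩
    · intro u hu
      rcases mem_insert.mp hu with rfl | hu
      · exact hB (hYf z hy)
      · rw [mem_singleton.mp hu]; exact hC (hZC z hz)
    · rintro rfl
      exact disjoint_left.mp hBC (hYf _ hy) (hZC _ hz)
  have hQ : ∀ p ∈ Q, p ⊆ H.verts ∧ p.card = 2 := by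
    intro p hp
    obtain ⟨z, hz, hp⟩ := mem_biUnion.mp hp
    obtain ⟨w, hw, rfl⟩ := mem_image.mp hp
    refine ⟨?_, card_pair ?_⟩
    · intro u hu
      rcases mem_insert.mp hu with rfl | hu
      · exact hC (hZC _ hz)
      · rw [mem_singleton.mp hu]; exact hD (hWf z hw)
    · rintro rfl
      exact disjoint_left.mp hCD (hZC _ hz) (hWf _ hw)
  have hmP : ∀ u v : ℕ, ({u, v} : Finset ℕ) ∈ P ↔
      (v ∈ Z ∧ u ∈ Yf v) ∨ (u ∈ Z ∧ v ∈ Yf u) := by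
    intro u v
    simp only [P, mem_biUnion, mem_image]
    constructor
    · rintro ⟨z, hz, y, hy, h⟩
      rcases pair_eq h with ⟨rfl, rfl⟩ | ⟨rfl, rfl⟩
      · exact Or.inl ⟨hz, hy⟩
      · exact Or.inr ⟨hz, hy⟩
    · rintro (⟨h1, h2⟩ | ⟨h1, h2⟩)
      · exact ⟨v, h1, u, h2, rfl⟩
      · exact ⟨u, h1, v, h2, Finset.pair_comm _ _⟩
  have hmQ : ∀ u v : ℕ, ({u, v} : Finset ℕ) ∈ Q ↔
      (u ∈ Z ∧ v ∈ Wf u) ∨ (v ∈ Z ∧ u ∈ Wf v) := by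
    intro u v
    simp only [Q, mem_biUnion, mem_image]
    constructor
    · rintro ⟨z, hz, y, hy, h⟩
      rcases pair_eq h with ⟨rfl, rfl⟩ | ⟨rfl, rfl⟩
      · exact Or.inl ⟨hz, hy⟩
      · exact Or.inr ⟨hz, hy⟩
    · rintro (⟨h1, h2⟩ | ⟨h1, h2⟩)
      · exact ⟨u, h1, v, h2, rfl⟩
      · exact ⟨v, h1, u, h2, Finset.pair_comm _ _⟩
  let F : (Σ _ : ℕ, ℕ × ℕ) → ℕ × ℕ × ℕ := fun t => (t.2.1, t.1, t.2.2)
  have hF : Function.Injective F := by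
    rintro ⟨z, y, w⟩ ⟨z', y', w'⟩ h
    simp only [F, Prod.mk.injEq] at h
    obtain ⟨rfl, rfl, rfl⟩ := h
    rfl
  -- the middle vertex of a triple of `K_{ee}(P, Q)` must lie in `C`, as `B` and `D` are disjoint
  have hK : KEE H P Q = (Z.sigma fun z => Yf z ×ˢ Wf z).image F := by
    ext ⟨x, y, w⟩
    simp only [KEE, mem_filter, mem_product, mem_image, mem_sigma, hmP, hmQ, F, Sigma.exists,
      Prod.exists, Prod.mk.injEq]
    constructor
    · rintro ⟨-, h1, h2⟩
      rcases h1 with ⟨h1, h1'⟩ | ⟨h1, h1'⟩ <;> rcases h2 with ⟨h2, h2'⟩ | ⟨h2, h2'⟩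
      · exact ⟨y, x, w, ⟨h1, h1', h2'⟩, rfl, rfl, rfl⟩
      · exact absurd (hWf _ h2') (disjoint_left.mp hCD (hZC _ h1))
      · exact absurd (hZC _ h2) (disjoint_left.mp hBC (hYf _ h1'))
      · exact absurd (hWf _ h2') (disjoint_left.mp hBD (hYf _ h1'))
    · rintro ⟨z, y', w', ⟨h1, h2, h3⟩, rfl, rfl, rfl⟩
      exact ⟨⟨hB (hYf _ h2), hC (hZC _ h1), hD (hWf _ h3)⟩, Or.inl ⟨h1, h2⟩, Or.inl ⟨h1, h3⟩⟩
  have hK1 : (KEE H P Q).card = ∑ z ∈ Z, (Yf z).card * (Wf z).card := by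
    rw [hK, card_image_of_injective _ hF, card_sigma]
    simp only [card_product]
  have hK2 : eEE H P Q = ∑ z ∈ Z, linkCount H z (Yf z) (Wf z) := by
    unfold eEE linkCount
    rw [hK, card_filter, sum_image hF.injOn, sum_sigma]
    simp only [card_filter, F]
  have h := hH P Q hP hQ
  rw [hK1, hK2] at h
  push_cast at h
  have h2 : ∑ z ∈ Z, (linkCount H z (Yf z) (Wf z) : ℝ) ≤
      ∑ z ∈ Z, (d * ((Yf z).card * (Wf z).card) - δ * (B.card * D.card)) :=
    sum_le_sum fun z hz => (hlt z (mem_filter.mp hz).2).le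
  rw [sum_sub_distrib, ← mul_sum, sum_const, nsmul_eq_mul] at h2
  linarith

/-- In a stable pair `(C, B)` few vertices of `C` have small `a`-degree into a large `Y ⊆ B`:
otherwise they would form with `Y` a large box in which the colour `a` is too rare. -/
lemma few_bad {φ : Finset ℕ → ℕ} {Φ C B S : Finset ℕ} {ε₀ ε γ : ℝ}
    (h : Stable φ Φ C B S ε₀ ε γ) {a : ℕ} (haΦ : a ∈ Φ) (ha : a ∈ S) {Y : Finset ℕ} (hY : Y ⊆ B)
    (hYc : γ * B.card ≤ Y.card) (hC : 0 < γ * C.card) :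
    ((C.filter fun z => ((Y.filter fun y => φ {z, y} = a).card : ℝ) < ε * Y.card).card : ℝ)
      ≤ γ * C.card := by
  by_contra hcon
  push Not at hcon
  set Z := C.filter fun z => ((Y.filter fun y => φ {z, y} = a).card : ℝ) < ε * Y.card with hZ
  have h1 := (h Z (filter_subset _ _) Y hY hcon.le hYc a haΦ).1 ha
  have hne : Z.Nonempty := by
    rw [← card_pos]
    exact_mod_cast hC.trans hcon
  rw [colCount_eq_sum] at h1
  push_cast at h1
  have h2 : ∑ z ∈ Z, ((Y.filter fun y => φ {z, y} = a).card : ℝ) < ∑ z ∈ Z, ε * (Y.card : ℝ) :=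
    sum_lt_sum_of_nonempty hne fun z hz => (mem_filter.mp hz).2
  rw [sum_const, nsmul_eq_mul] at h2
  linarith

lemma pick {φ : Finset ℕ → ℕ} {Φ C B D S Z : Finset ℕ} {ε₀ ε γ : ℝ}
    (hCB : Stable φ Φ C B S ε₀ ε γ) (hCD : Stable φ Φ C D S ε₀ ε γ)
    (hγ : 3 * γ < 1) (hC : 0 < γ * C.card) (hZ : (Z.card : ℝ) ≤ γ * C.card) (hS : S ⊆ Φ)
    {a b : ℕ} (ha : a ∈ S) (hb : b ∈ S) {Y W : Finset ℕ} (hY : Y ⊆ B) (hW : W ⊆ D)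
    (hYc : γ * B.card ≤ Y.card) (hWc : γ * D.card ≤ W.card) :
    ∃ z ∈ C, z ∉ Z ∧ ε * Y.card ≤ (Y.filter fun y => φ {z, y} = a).card ∧
      ε * W.card ≤ (W.filter fun w => φ {z, w} = b).card := by
  have h1 := few_bad hCB (hS ha) ha hY hYc hC
  have h2 := few_bad hCD (hS hb) hb hW hWc hC
  set Z₁ := C.filter fun z => ((Y.filter fun y => φ {z, y} = a).card : ℝ) < ε * Y.card
  set Z₂ := C.filter fun z => ((W.filter fun w => φ {z, w} = b).card : ℝ) < ε * W.card
  have h3 : ((Z ∪ Z₁ ∪ Z₂).card : ℝ) ≤ Z.card + Z₁.card + Z₂.card := by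
    exact_mod_cast (card_union_le _ _).trans (Nat.add_le_add_right (card_union_le _ _) _)
  have hCpos : (0 : ℝ) < C.card := by
    rcases (Nat.cast_nonneg (α := ℝ) C.card).lt_or_eq with h | h
    · exact h
    · rw [← h, mul_zero] at hC; exact absurd hC (lt_irrefl _)
  have h4 : (Z ∪ Z₁ ∪ Z₂).card < C.card := by
    have : ((Z ∪ Z₁ ∪ Z₂).card : ℝ) < C.card := by nlinarith
    exact_mod_cast this
  obtain ⟨z, hz, hzn⟩ := exists_mem_notMem_of_card_lt_card h4
  simp only [mem_union, not_or] at hzn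
  refine ⟨z, hz, hzn.1.1, ?_, ?_⟩
  · by_contra hcon
    exact hzn.1.2 (mem_filter.mpr ⟨hz, not_le.mp hcon⟩)
  · by_contra hcon
    exact hzn.2 (mem_filter.mpr ⟨hz, not_le.mp hcon⟩)

/-- A sub-box `Y × W` of `B × D`, still large, all of which lies in the prescribed colour
neighbourhoods of suitable vertices: for each task `(k, a, b)` some `z ∈ X k`, outside the
exceptional set `Z k`, sends colour `a` to all of `Y` and colour `b` to all of `W`. -/
lemma common_box {φ : Finset ℕ → ℕ} {Φ B D S : Finset ℕ} {X Z : Fin 3 → Finset ℕ} {ε₀ ε : ℝ}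
    {L : ℕ} (hB : ∀ k, Stable φ Φ (X k) B S ε₀ ε (ε ^ L))
    (hD : ∀ k, Stable φ Φ (X k) D S ε₀ ε (ε ^ L)) (hε : 0 < ε) (hε1 : ε ≤ 1)
    (hγ : 3 * ε ^ L < 1) (hX : ∀ k, 0 < (X k).card)
    (hZ : ∀ k, ((Z k).card : ℝ) ≤ ε ^ L * (X k).card) (hS : S ⊆ Φ)
    (T : Finset (Fin 3 × ℕ × ℕ)) :
    (∀ t ∈ T, t.2.1 ∈ S ∧ t.2.2 ∈ S) → T.card ≤ L →
    ∃ Y ⊆ B, ∃ W ⊆ D, ε ^ T.card * B.card ≤ Y.card ∧ ε ^ T.card * D.card ≤ W.card ∧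
      ∀ t ∈ T, ∃ z ∈ X t.1, z ∉ Z t.1 ∧ (∀ y ∈ Y, φ {z, y} = t.2.1) ∧
        ∀ w ∈ W, φ {z, w} = t.2.2 := by
  induction T using Finset.induction_on with
  | empty => intro _ _; exact ⟨B, Subset.rfl, D, Subset.rfl, by simp, by simp, by simp⟩
  | insert t T ht ih =>
    intro hT hc
    rw [card_insert_of_notMem ht] at hc ⊢
    obtain ⟨Y, hY, W, hW, hYc, hWc, hz⟩ :=
      ih (fun t' ht' => hT t' (mem_insert_of_mem ht')) (by omega)
    have hpow : ε ^ L ≤ ε ^ T.card := pow_le_pow_of_le_one hε.le hε1 (by omega)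
    obtain ⟨ha, hb⟩ := hT t (mem_insert_self _ _)
    obtain ⟨z, hzX, hzZ, h1, h2⟩ := pick (hB t.1) (hD t.1) hγ
      (mul_pos (pow_pos hε L) (by exact_mod_cast hX t.1)) (hZ t.1) hS ha hb hY hW
      (le_trans (by gcongr) hYc) (le_trans (by gcongr) hWc)
    refine ⟨Y.filter fun y => φ {z, y} = t.2.1, (filter_subset _ _).trans hY,
      W.filter fun w => φ {z, w} = t.2.2, (filter_subset _ _).trans hW, ?_, ?_, ?_⟩
    · calc ε ^ (T.card + 1) * (B.card : ℝ) = ε * (ε ^ T.card * B.card) := by ring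
        _ ≤ ε * Y.card := by gcongr
        _ ≤ _ := h1
    · calc ε ^ (T.card + 1) * (D.card : ℝ) = ε * (ε ^ T.card * D.card) := by ring
        _ ≤ ε * W.card := by gcongr
        _ ≤ _ := h2
    · intro t' ht'
      rcases mem_insert.mp ht' with rfl | ht'
      · exact ⟨z, hzX, hzZ, fun y hy => (mem_filter.mp hy).2, fun w hw => (mem_filter.mp hw).2⟩
      · obtain ⟨z', h1, h2, h3, h4⟩ := hz t' ht'
        exact ⟨z', h1, h2, fun y hy => h3 y (mem_filter.mp hy).1,
          fun w hw => h4 w (mem_filter.mp hw).1⟩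

/-- If each edge of the link of `z` on `Y × W` has a colour `g p` with `p ∈ T`, the link is bounded
by the total count of these colours. -/
lemma link_le_sum {H : ThreeGraph} {φ : Finset ℕ → ℕ} {z : ℕ} {Y W : Finset ℕ} {T : Palette}
    {g : ℕ × ℕ × ℕ → ℕ}
    (h : ∀ y ∈ Y, ∀ w ∈ W, ({y, z, w} : Finset ℕ) ∈ H.edges → ∃ p ∈ T, φ {y, w} = g p) :
    (linkCount H z Y W : ℝ) ≤ ∑ p ∈ T, (colCount φ Y W (g p) : ℝ) := by
  have : linkCount H z Y W ≤ ∑ p ∈ T, colCount φ Y W (g p) := by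
    refine le_trans (card_le_card ?_) card_biUnion_le
    intro q hq
    simp only [mem_filter, mem_product] at hq
    obtain ⟨p, hp, hpq⟩ := h q.1 hq.1.1 q.2 hq.1.2 hq.2
    exact mem_biUnion.mpr ⟨p, hp, mem_filter.mpr ⟨mem_product.mpr hq.1, hpq⟩⟩
  exact_mod_cast this

/-! ### The palette Lagrangian -/

lemma palColours_mem {P : Palette} {p : ℕ × ℕ × ℕ} (hp : p ∈ P) :
    p.1 ∈ palColours P ∧ p.2.1 ∈ palColours P ∧ p.2.2 ∈ palColours P := by
  unfold palColours
  refine ⟨?_, ?_, ?_⟩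
  · exact mem_union_left _ (mem_union_left _ (mem_image_of_mem _ hp))
  · exact mem_union_left _ (mem_union_right _ (mem_image_of_mem _ hp))
  · exact mem_union_right _ (mem_image_of_mem _ hp)

lemma lamCodeg_nonneg {P : Palette} {x : ℕ → ℝ} (hx : IsWeighting P x) (a b : ℕ) :
    0 ≤ lamCodeg P a b x := by
  unfold lamCodeg
  have h : ∀ (T : Palette), T ⊆ P → 0 ≤ ∑ p ∈ T, x p.1 ∧ 0 ≤ ∑ p ∈ T, x p.2.1 ∧
      0 ≤ ∑ p ∈ T, x p.2.2 := fun T hT =>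
    ⟨sum_nonneg fun p hp => hx.1 _ (palColours_mem (hT hp)).1,
      sum_nonneg fun p hp => hx.1 _ (palColours_mem (hT hp)).2.1,
      sum_nonneg fun p hp => hx.1 _ (palColours_mem (hT hp)).2.2⟩
  refine le_min (le_min (le_min ?_ ?_) (le_min ?_ ?_)) (le_min ?_ ?_)
  · exact (h _ (filter_subset _ _)).2.2
  · exact (h _ (filter_subset _ _)).2.2
  · exact (h _ (filter_subset _ _)).2.1
  · exact (h _ (filter_subset _ _)).2.1
  · exact (h _ (filter_subset _ _)).1
  · exact (h _ (filter_subset _ _)).1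

lemma lamEE_nonneg {P : Palette} {x : ℕ → ℝ} (hx : IsWeighting P x) : 0 ≤ lamEE P x := by
  refine Real.sInf_nonneg ?_
  rintro _ ⟨a, -, b, -, -, rfl⟩
  exact lamCodeg_nonneg hx a b

lemma LambdaEE_nonneg (P : Palette) : 0 ≤ LambdaEE P := by
  refine Real.sSup_nonneg ?_
  rintro _ ⟨x, hx, rfl⟩
  exact lamEE_nonneg hx

lemma lamEE_le_one {P : Palette} {x : ℕ → ℝ} (hx : IsWeighting P x) : lamEE P x ≤ 1 := by
  obtain ⟨a, ha, hpos⟩ : ∃ a ∈ palColours P, 0 < x a := by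
    by_contra hcon
    push Not at hcon
    have := sum_nonpos hcon
    rw [hx.2] at this
    linarith
  have hbdd : BddBelow {l : ℝ | ∃ a ∈ palColours P, ∃ b ∈ palColours P,
      0 < x a * x b ∧ l = lamCodeg P a b x} := by
    refine ⟨0, ?_⟩
    rintro _ ⟨a, -, b, -, -, rfl⟩
    exact lamCodeg_nonneg hx a b
  have h1 : lamEE P x ≤ lamCodeg P a a x :=
    csInf_le hbdd ⟨a, ha, a, ha, mul_pos hpos hpos, rfl⟩
  have h2 : lamCodeg P a a x ≤ ∑ p ∈ P.filter (fun p => p.1 = a ∧ p.2.1 = a), x p.2.2 :=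
    (min_le_left _ _).trans ((min_le_left _ _).trans (min_le_left _ _))
  refine h1.trans (h2.trans ?_)
  have hinj : Set.InjOn (fun p : ℕ × ℕ × ℕ => p.2.2)
      (P.filter (fun p => p.1 = a ∧ p.2.1 = a) : Finset _) := by
    rintro ⟨p1, p2, p3⟩ hp ⟨q1, q2, q3⟩ hq h
    simp only [mem_coe, mem_filter] at hp hq h
    obtain ⟨-, rfl, rfl⟩ := hp
    obtain ⟨-, rfl, rfl⟩ := hq
    rw [h]
  rw [← sum_image (f := x) hinj, ← hx.2]
  refine sum_le_sum_of_subset_of_nonneg ?_ fun c hc _ => hx.1 c hc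
  intro c hc
  obtain ⟨p, hp, rfl⟩ := mem_image.mp hc
  exact (palColours_mem (mem_filter.mp hp).1).2.2

lemma lamEE_le_LambdaEE {P : Palette} {x : ℕ → ℝ} (hx : IsWeighting P x) :
    lamEE P x ≤ LambdaEE P := by
  refine le_csSup ⟨1, ?_⟩ ⟨x, hx, rfl⟩
  rintro _ ⟨y, hy, rfl⟩
  exact lamEE_le_one hy

/-- If the colours outside `S` are rare in the box `Y × W`, the colour densities of the box,
restricted to `S` and normalized, form a weighting; codegree bounds on the box for all pairs of
colours of `S` therefore bound `Λ^{ee}` from below. -/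
lemma le_LambdaEE_of_box {P : Palette} {φ : Finset ℕ → ℕ} {Y W S : Finset ℕ} {ε₀ D : ℝ}
    (hY : 0 < Y.card) (hW : 0 < W.card) (hε₀ : 0 ≤ ε₀)
    (hcol : ∀ y ∈ Y, ∀ w ∈ W, φ {y, w} ∈ palColours P) (hS : S ⊆ palColours P)
    (hpos : ∀ c ∈ S, 0 < colCount φ Y W c)
    (hsmall : ∀ c ∈ palColours P, c ∉ S → (colCount φ Y W c : ℝ) ≤ ε₀ * (Y.card * W.card))
    (hK : ε₀ * (palColours P).card < 1)
    (hdeg : ∀ a ∈ S, ∀ b ∈ S,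
      D * (Y.card * W.card) ≤
        ∑ p ∈ P.filter (fun p => p.1 = a ∧ p.2.1 = b), (colCount φ Y W p.2.2 : ℝ) ∧
      D * (Y.card * W.card) ≤
        ∑ p ∈ P.filter (fun p => p.1 = a ∧ p.2.2 = b), (colCount φ Y W p.2.1 : ℝ) ∧
      D * (Y.card * W.card) ≤
        ∑ p ∈ P.filter (fun p => p.2.1 = a ∧ p.2.2 = b), (colCount φ Y W p.1 : ℝ)) :
    D - P.card * ε₀ ≤ LambdaEE P := by
  classical
  set N : ℝ := (Y.card : ℝ) * W.card with hN
  have hNpos : 0 < N := mul_pos (by exact_mod_cast hY) (by exact_mod_cast hW)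
  set q : ℕ → ℝ := fun c => (colCount φ Y W c : ℝ) / N with hq
  have hq0 : ∀ c, 0 ≤ q c := fun c => div_nonneg (Nat.cast_nonneg _) hNpos.le
  have hqsum : ∑ c ∈ palColours P, q c = 1 := by
    have h1 : (Y ×ˢ W).card = ∑ c ∈ palColours P, colCount φ Y W c :=
      card_eq_sum_card_fiberwise (f := fun p : ℕ × ℕ => φ {p.1, p.2}) fun p hp => by
        have := mem_product.mp (mem_coe.mp hp)
        exact hcol _ this.1 _ this.2
    rw [card_product] at h1
    have h2 : N = ∑ c ∈ palColours P, (colCount φ Y W c : ℝ) := by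
      rw [hN]; exact_mod_cast h1
    simp only [hq]
    rw [← sum_div, ← h2, div_self hNpos.ne']
  have hqsmall : ∀ c ∈ palColours P, c ∉ S → q c ≤ ε₀ := fun c hc hcS => by
    simp only [hq]
    rw [div_le_iff₀ hNpos]
    exact hsmall c hc hcS
  have hSne : S.Nonempty := by
    rw [nonempty_iff_ne_empty]
    rintro rfl
    have : ∑ c ∈ palColours P, q c ≤ ∑ c ∈ palColours P, ε₀ :=
      sum_le_sum fun c hc => hqsmall c hc (notMem_empty _)
    rw [hqsum, sum_const, nsmul_eq_mul] at this
    linarith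
  have hqpos : ∀ c ∈ S, 0 < q c := fun c hc =>
    div_pos (by exact_mod_cast hpos c hc) hNpos
  set s : ℝ := ∑ c ∈ S, q c with hs
  have hspos : 0 < s := sum_pos hqpos hSne
  have hs1 : s ≤ 1 := by
    rw [← hqsum]
    exact sum_le_sum_of_subset_of_nonneg hS fun c _ _ => hq0 c
  set x : ℕ → ℝ := fun c => if c ∈ S then q c / s else 0 with hx
  have hx0 : ∀ c, 0 ≤ x c := fun c => by
    simp only [hx]
    split_ifs
    · exact div_nonneg (hq0 c) hspos.le
    · exact le_rfl
  have hxw : IsWeighting P x := by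
    refine ⟨fun c _ => hx0 c, ?_⟩
    rw [← sum_subset hS (fun c _ hc => by simp only [hx, hc, if_false]),
      sum_congr rfl (fun c hc => by simp only [hx, hc, if_true] : ∀ c ∈ S, x c = q c / s),
      ← sum_div, ← hs, div_self hspos.ne']
  have hqx : ∀ c ∈ palColours P, q c ≤ x c + ε₀ := by
    intro c hc
    by_cases hcS : c ∈ S
    · have : q c ≤ x c := by
        simp only [hx, hcS, if_true]
        rw [le_div_iff₀ hspos]
        exact mul_le_of_le_one_right (hq0 c) hs1
      linarith
    · have := hqsmall c hc hcS
      linarith [hx0 c]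
  have htrans : ∀ (T : Palette) (g : ℕ × ℕ × ℕ → ℕ), T ⊆ P → (∀ p ∈ T, g p ∈ palColours P) →
      D * N ≤ ∑ p ∈ T, (colCount φ Y W (g p) : ℝ) → D - P.card * ε₀ ≤ ∑ p ∈ T, x (g p) := by
    intro T g hT hg hD
    have h1 : D ≤ ∑ p ∈ T, q (g p) := by
      simp only [hq]
      rw [← sum_div, le_div_iff₀ hNpos]
      exact hD
    have h2 : ∑ p ∈ T, q (g p) ≤ ∑ p ∈ T, (x (g p) + ε₀) :=
      sum_le_sum fun p hp => hqx _ (hg p hp)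
    rw [sum_add_distrib, sum_const, nsmul_eq_mul] at h2
    have h3 : (T.card : ℝ) * ε₀ ≤ P.card * ε₀ := by
      have : (T.card : ℝ) ≤ P.card := by exact_mod_cast card_le_card hT
      gcongr
    linarith
  refine le_trans ?_ (lamEE_le_LambdaEE hxw)
  obtain ⟨c, hc⟩ := hSne
  have hxpos : 0 < x c := by
    simp only [hx, hc, if_true]
    exact div_pos (hqpos c hc) hspos
  refine le_csInf ⟨_, c, hS hc, c, hS hc, mul_pos hxpos hxpos, rfl⟩ ?_
  rintro _ ⟨a, -, b, -, hab, rfl⟩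
  have ha : a ∈ S := by
    by_contra h
    simp only [hx, h, if_false, zero_mul, lt_irrefl] at hab
  have hb : b ∈ S := by
    by_contra h
    simp only [hx, h, if_false, mul_zero, lt_irrefl] at hab
  obtain ⟨h1, h2, h3⟩ := hdeg a ha b hb
  obtain ⟨h4, h5, h6⟩ := hdeg b hb a ha
  have m : ∀ {f : ℕ × ℕ × ℕ → Prop} [DecidablePred f] {p}, p ∈ P.filter f → p ∈ P :=
    fun hp => (mem_filter.mp hp).1
  unfold lamCodeg
  refine le_min (le_min (le_min ?_ ?_) (le_min ?_ ?_)) (le_min ?_ ?_)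
  · exact htrans _ (fun p => p.2.2) (filter_subset _ _) (fun p hp => (palColours_mem (m hp)).2.2) h1
  · exact htrans _ (fun p => p.2.2) (filter_subset _ _) (fun p hp => (palColours_mem (m hp)).2.2) h4
  · exact htrans _ (fun p => p.2.1) (filter_subset _ _) (fun p hp => (palColours_mem (m hp)).2.1) h2
  · exact htrans _ (fun p => p.2.1) (filter_subset _ _) (fun p hp => (palColours_mem (m hp)).2.1) h5
  · exact htrans _ (fun p => p.1) (filter_subset _ _) (fun p hp => (palColours_mem (m hp)).1) h3
  · exact htrans _ (fun p => p.1) (filter_subset _ _) (fun p hp => (palColours_mem (m hp)).1) h6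

/-! ### Intervals and the proof of the bound -/

/-- The first `m` consecutive intervals of length `s` in the ordering `ord` of `V`. -/
lemma exists_intervals (V : Finset ℕ) (ord : ℕ → ℕ) (hord : Set.InjOn ord V) (m s : ℕ)
    (h : m * s ≤ V.card) :
    ∃ I : ℕ → Finset ℕ, (∀ i < m, I i ⊆ V ∧ (I i).card = s) ∧
      ∀ i j, i < j → j < m → ∀ u ∈ I i, ∀ v ∈ I j, ord u < ord v := by
  have hcard : (V.image ord).card = V.card := card_image_of_injOn hord
  let e := (V.image ord).orderEmbOfFin hcard
  have hsurj : ∀ k : Fin V.card, ∃ v ∈ V, ord v = e k := fun k =>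
    mem_image.mp (orderEmbOfFin_mem _ hcard k)
  choose g hgV hg using hsurj
  have hmono : ∀ k l, k < l → ord (g k) < ord (g l) := fun k l hkl => by
    rw [hg, hg]; exact e.strictMono hkl
  have hinj : Function.Injective g := fun k l hkl => by
    apply e.injective
    rw [← hg, ← hg, hkl]
  refine ⟨fun i => (univ.filter fun k : Fin V.card => i * s ≤ k.1 ∧ k.1 < (i + 1) * s).image g,
    fun i hi => ⟨?_, ?_⟩, ?_⟩
  · intro v hv
    obtain ⟨k, -, rfl⟩ := mem_image.mp hv
    exact hgV k
  · rw [card_image_of_injective _ hinj]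
    have hle : (i + 1) * s ≤ V.card := (Nat.mul_le_mul_right s hi).trans h
    have : ((univ.filter fun k : Fin V.card => i * s ≤ k.1 ∧ k.1 < (i + 1) * s).image
        fun k => k.1) = Finset.Ico (i * s) ((i + 1) * s) := by
      ext k
      simp only [mem_image, mem_filter, mem_univ, true_and, mem_Ico]
      constructor
      · rintro ⟨k, hk, rfl⟩; exact hk
      · intro hk; exact ⟨⟨k, hk.2.trans_le hle⟩, hk, rfl⟩
    rw [← card_image_of_injective _ Fin.val_injective, this, Nat.card_Ico, Nat.add_mul]
    omega
  · intro i j hij hj u hu v hv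
    obtain ⟨k, hk, rfl⟩ := mem_image.mp hu
    obtain ⟨l, hl, rfl⟩ := mem_image.mp hv
    apply hmono
    have h1 := (mem_filter.mp hk).2.2
    have h2 := (mem_filter.mp hl).2.1
    have h3 : (i + 1) * s ≤ j * s := Nat.mul_le_mul_right s hij
    exact Fin.lt_def.mpr (h1.trans_le (h3.trans h2))

set_option maxHeartbeats 1600000 in
/-- The bound for 3-graphs satisfying the palette exactly, for all sufficiently small `η`. -/
lemma core (ν : ℝ) (hν : 0 < ν) (P : Palette) :
    ∃ η₀ : ℝ, 0 < η₀ ∧ ∃ N : ℕ, ∀ H : ThreeGraph, N ≤ H.verts.card → Satisfies H P →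
      ∀ d η : ℝ, IsDenseEE H d η → η ≤ η₀ → d ≤ LambdaEE P + ν := by
  set Φ := palColours P with hΦ
  set K := Φ.card with hK
  set L := 3 * (K * K) + 1 with hL
  obtain ⟨ε₀, h0, h14, hK1, hP1⟩ : ∃ ε₀ : ℝ, 0 < ε₀ ∧ ε₀ ≤ 1 / 4 ∧ ε₀ * K < 1 ∧
      P.card * ε₀ ≤ ν / 2 := by
    have hK0 : (0 : ℝ) ≤ K := Nat.cast_nonneg _
    have hP0 : (0 : ℝ) ≤ P.card := Nat.cast_nonneg _
    refine ⟨min (1 / 4) (min (1 / (K + 1)) (ν / (2 * (P.card + 1)))), by positivity,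
      min_le_left _ _, ?_, ?_⟩
    · have h1 : min (1 / 4 : ℝ) (min (1 / (K + 1)) (ν / (2 * (P.card + 1)))) ≤ 1 / (K + 1) :=
        (min_le_right _ _).trans (min_le_left _ _)
      calc _ ≤ 1 / ((K : ℝ) + 1) * K := by gcongr
        _ < 1 := by rw [one_div_mul_eq_div, div_lt_one (by positivity)]; linarith
    · have h1 : min (1 / 4 : ℝ) (min (1 / (K + 1)) (ν / (2 * (P.card + 1)))) ≤
          ν / (2 * (P.card + 1)) := (min_le_right _ _).trans (min_le_right _ _)
      calc _ ≤ (P.card : ℝ) * (ν / (2 * (P.card + 1))) := by gcongr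
        _ = ν / 2 * (P.card / (P.card + 1)) := by field_simp
        _ ≤ ν / 2 * 1 := by gcongr; rw [div_le_one (by positivity)]; linarith
        _ = ν / 2 := mul_one _
  obtain ⟨m, hm⟩ := ramsey_five ↥(Φ.powerset)
  obtain ⟨μ, hμ, hμ0, hstab⟩ := stabilize Φ m L ε₀ h0 (by linarith) (m * (m * K) + 1)
  have hμ1 : μ ≤ 1 := by linarith
  -- the parts found below all have at least `κ * n` vertices
  set κ : ℝ := μ / (2 * (m + 1)) with hκ
  have hκpos : 0 < κ := by positivity
  set δ : ℝ := ν / 2 * (μ ^ L * μ ^ L) with hδ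
  have hδpos : 0 < δ := by positivity
  refine ⟨δ * μ ^ L * κ ^ 3, by positivity, 2 * (m + 1), fun H hn hsat d η hd hη => ?_⟩
  obtain ⟨ord, φ, hord, hcol, hpal⟩ := hsat
  set n := H.verts.card with hnn
  set s := n / (m + 1) with hs
  have hs0 : n < 2 * (m + 1) * s := by
    have h1 : n < (m + 1) * (s + 1) := by
      have := Nat.lt_div_mul_add (a := n) (b := m + 1) (Nat.succ_pos m)
      rw [← hs] at this
      linarith
    have h2 : 2 ≤ s := by rw [hs, Nat.le_div_iff_mul_le (Nat.succ_pos m)]; exact hn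
    nlinarith
  have hms : m * s ≤ n :=
    (Nat.mul_le_mul_right s (Nat.le_succ m)).trans (Nat.mul_div_le n (m + 1))
  obtain ⟨I, hI, hIord⟩ := exists_intervals H.verts ord hord m s hms
  obtain ⟨ε, V, S, hμε, hεε, hV, hS, hSt⟩ := hstab φ I (fun _ _ => Φ) (by
      simp only [sum_const, card_range, smul_eq_mul, ← hK]
      exact Nat.lt_succ_self _) (fun i j _ _ c hc hc' => absurd hc hc')
  obtain ⟨c, i, him, hic⟩ := hm fun i j => ⟨S i j, mem_powerset.mpr (hS i j)⟩
  have hε : 0 < ε := hμ.trans_le hμε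
  have hε1 : ε ≤ 1 := by linarith
  have hεL : 0 < ε ^ L := pow_pos hε L
  have hμεL : μ ^ L ≤ ε ^ L := by gcongr
  have hγ : 3 * ε ^ L < 1 := by
    have : ε ^ L ≤ ε ^ 1 := pow_le_pow_of_le_one hε.le hε1 (by omega)
    rw [pow_one] at this
    linarith
  have hnpos : 0 < (n : ℝ) := by
    have : 0 < n := by omega
    exact_mod_cast this
  set A : ℕ → Finset ℕ := fun k => V (i k) with hA
  have hAsub : ∀ k < 5, A k ⊆ H.verts := fun k hk => (hV _).1.trans (hI _ (him k hk)).1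
  have hAcard : ∀ k < 5, κ * n ≤ (A k).card := by
    intro k hk
    have h1 := (hV (i k)).2
    rw [(hI _ (him k hk)).2] at h1
    refine le_trans ?_ h1
    have h2 : (n : ℝ) ≤ 2 * (m + 1) * s := by exact_mod_cast hs0.le
    calc κ * n ≤ κ * (2 * (m + 1) * s) := by gcongr
      _ = μ * s := by rw [hκ]; field_simp
  have hApos : ∀ k < 5, (0 : ℝ) < (A k).card := fun k hk =>
    (mul_pos hκpos hnpos).trans_le (hAcard k hk)
  have hAord : ∀ k l, k < l → l < 5 → ∀ u ∈ A k, ∀ v ∈ A l, ord u < ord v := by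
    intro k l hkl hl u hu v hv
    exact hIord _ _ (hic k (hkl.trans hl) l hl hkl).1 (him l hl) u ((hV _).1 hu) v ((hV _).1 hv)
  have hAdisj : ∀ k l, k < l → l < 5 → Disjoint (A k) (A l) := by
    intro k l hkl hl
    rw [disjoint_left]
    intro u hu hv
    exact lt_irrefl _ (hAord k l hkl hl u hu u hv)
  have hASt : ∀ k l, k < l → l < 5 → Stable φ Φ (A k) (A l) c.1 ε₀ ε (ε ^ L) := by
    intro k l hkl hl
    obtain ⟨h1, h2⟩ := hic k (hkl.trans hl) l hl hkl
    rw [← h2]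
    exact hSt _ _ h1 (him l hl)
  have hcΦ : c.1 ⊆ Φ := mem_powerset.mp c.2
  set B := A 1 with hB
  set D := A 3 with hD
  -- the vertices realizing the colour pairs come from between, before and after `B` and `D`
  let X : Fin 3 → Finset ℕ := ![A 2, A 0, A 4]
  have hXcard : ∀ k, κ * n ≤ (X k).card := by
    intro k
    fin_cases k
    · exact hAcard 2 (by norm_num)
    · exact hAcard 0 (by norm_num)
    · exact hAcard 4 (by norm_num)
  have hXpos : ∀ k, (0 : ℝ) < (X k).card := fun k => (mul_pos hκpos hnpos).trans_le (hXcard k)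
  have hXsub : ∀ k, X k ⊆ H.verts := by
    intro k
    fin_cases k
    · exact hAsub 2 (by norm_num)
    · exact hAsub 0 (by norm_num)
    · exact hAsub 4 (by norm_num)
  have hXB : ∀ k, Disjoint B (X k) ∧ Stable φ Φ (X k) B c.1 ε₀ ε (ε ^ L) := by
    intro k
    fin_cases k
    · exact ⟨hAdisj 1 2 (by norm_num) (by norm_num),
        (hASt 1 2 (by norm_num) (by norm_num)).symm⟩
    · exact ⟨(hAdisj 0 1 (by norm_num) (by norm_num)).symm,
        hASt 0 1 (by norm_num) (by norm_num)⟩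
    · exact ⟨hAdisj 1 4 (by norm_num) (by norm_num),
        (hASt 1 4 (by norm_num) (by norm_num)).symm⟩
  have hXD : ∀ k, Disjoint (X k) D ∧ Stable φ Φ (X k) D c.1 ε₀ ε (ε ^ L) := by
    intro k
    fin_cases k
    · exact ⟨hAdisj 2 3 (by norm_num) (by norm_num), hASt 2 3 (by norm_num) (by norm_num)⟩
    · exact ⟨hAdisj 0 3 (by norm_num) (by norm_num), hASt 0 3 (by norm_num) (by norm_num)⟩
    · exact ⟨(hAdisj 3 4 (by norm_num) (by norm_num)).symm,
        (hASt 3 4 (by norm_num) (by norm_num)).symm⟩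
  have hBpos : (0 : ℝ) < B.card := hApos 1 (by norm_num)
  have hDpos : (0 : ℝ) < D.card := hApos 3 (by norm_num)
  choose Z hZX hZc hZ using fun k => few_atypical H d η δ hd B (X k) D (hAsub 1 (by norm_num))
    (hXsub k) (hAsub 3 (by norm_num)) (hXB k).1 (hAdisj 1 3 (by norm_num) (by norm_num)) (hXD k).1
  have hZc' : ∀ k, ((Z k).card : ℝ) ≤ ε ^ L * (X k).card := by
    intro k
    have h1 : η * (n : ℝ) ^ 3 ≤ δ * μ ^ L * κ ^ 3 * n ^ 3 := by gcongr
    have h2 : κ ^ 3 * (n : ℝ) ^ 3 ≤ (X k).card * (B.card * D.card) := by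
      calc κ ^ 3 * (n : ℝ) ^ 3 = (κ * n) * ((κ * n) * (κ * n)) := by ring
        _ ≤ _ := by
          gcongr
          · exact hXcard k
          · exact hAcard 1 (by norm_num)
          · exact hAcard 3 (by norm_num)
    have h3 : (Z k).card * (δ * ((B.card : ℝ) * D.card)) ≤
        (ε ^ L * (X k).card) * (δ * (B.card * D.card)) := by
      calc _ ≤ η * (n : ℝ) ^ 3 := hZc k
        _ ≤ δ * μ ^ L * κ ^ 3 * n ^ 3 := h1
        _ = δ * μ ^ L * (κ ^ 3 * n ^ 3) := by ring
        _ ≤ δ * ε ^ L * ((X k).card * (B.card * D.card)) := by gcongr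
        _ = _ := by ring
    exact le_of_mul_le_mul_right h3 (by positivity)
  let T : Finset (Fin 3 × ℕ × ℕ) := univ ×ˢ (c.1 ×ˢ c.1)
  have hTc : T.card ≤ L := by
    have h1 : (c.1).card ≤ K := card_le_card hcΦ
    simp only [T, card_product, card_univ, Fintype.card_fin]
    have := Nat.mul_le_mul h1 h1
    omega
  have hTmem : ∀ t, t ∈ T ↔ t.2.1 ∈ c.1 ∧ t.2.2 ∈ c.1 := fun t => by
    simp only [T, mem_product, mem_univ, true_and]
  obtain ⟨Y, hY, W, hW, hYc, hWc, hYW⟩ := common_box (fun k => (hXB k).2) (fun k => (hXD k).2)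
    hε hε1 hγ (fun k => by exact_mod_cast hXpos k) hZc' hcΦ T (fun t ht => (hTmem t).mp ht) hTc
  have hTpow : ε ^ L ≤ ε ^ T.card := pow_le_pow_of_le_one hε.le hε1 hTc
  have hYc' : ε ^ L * B.card ≤ Y.card := le_trans (by gcongr) hYc
  have hWc' : ε ^ L * D.card ≤ W.card := le_trans (by gcongr) hWc
  have hYpos : (0 : ℝ) < Y.card := (mul_pos hεL hBpos).trans_le hYc'
  have hWpos : (0 : ℝ) < W.card := (mul_pos hεL hDpos).trans_le hWc'
  have hBDSt := hASt 1 3 (by norm_num) (by norm_num) Y hY W hW hYc' hWc'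
  have hδYW : δ * (B.card * D.card) ≤ ν / 2 * (Y.card * W.card) := by
    calc δ * ((B.card : ℝ) * D.card) = ν / 2 * ((μ ^ L * B.card) * (μ ^ L * D.card)) := by
          rw [hδ]; ring
      _ ≤ ν / 2 * ((ε ^ L * B.card) * (ε ^ L * D.card)) := by gcongr
      _ ≤ ν / 2 * (Y.card * W.card) := by gcongr
  have hlink : ∀ (k : Fin 3), ∀ a ∈ c.1, ∀ b ∈ c.1, ∃ z ∈ X k,
      (∀ y ∈ Y, φ {z, y} = a) ∧ (∀ w ∈ W, φ {z, w} = b) ∧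
      (d - ν / 2) * (Y.card * W.card) ≤ linkCount H z Y W := by
    intro k a ha b hb
    obtain ⟨z, hz, hzZ, h1, h2⟩ := hYW (k, a, b) ((hTmem _).mpr ⟨ha, hb⟩)
    refine ⟨z, hz, h1, h2, ?_⟩
    have := hZ k z hz hzZ Y hY W hW
    linarith
  have hfin := le_LambdaEE_of_box (P := P) (φ := φ) (Y := Y) (W := W) (S := c.1) (ε₀ := ε₀)
    (D := d - ν / 2) (by exact_mod_cast hYpos) (by exact_mod_cast hWpos) h0.le
    (fun y hy w hw => hcol y (hAsub 1 (by norm_num) (hY hy)) w (hAsub 3 (by norm_num) (hW hw))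
      (by
        rintro rfl
        exact disjoint_left.mp (hAdisj 1 3 (by norm_num) (by norm_num)) (hY hy) (hW hw)))
    hcΦ
    (fun a ha => by
      have h1 := (hBDSt a (hcΦ ha)).1 ha
      have h2 : (0 : ℝ) < colCount φ Y W a := lt_of_lt_of_le (by positivity) h1
      exact_mod_cast h2)
    (fun a ha haS => (hBDSt a ha).2 haS) hK1
    -- the position of `z` relative to `Y` and `W` decides which triple an edge forces:
    -- `y < z < w`, `z < y < w` and `y < w < z` respectively
    (fun a ha b hb => by
      refine ⟨?_, ?_, ?_⟩
      · obtain ⟨z, hz, hzY, hzW, hle⟩ := hlink 0 a ha b hb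
        refine hle.trans (link_le_sum fun y hy w hw he => ?_)
        have := hpal y z w he (hAord 1 2 (by norm_num) (by norm_num) y (hY hy) z hz)
          (hAord 2 3 (by norm_num) (by norm_num) z hz w (hW hw))
        rw [Finset.pair_comm y z, hzY y hy, hzW w hw] at this
        exact ⟨_, mem_filter.mpr ⟨this, rfl, rfl⟩, rfl⟩
      · obtain ⟨z, hz, hzY, hzW, hle⟩ := hlink 1 a ha b hb
        refine hle.trans (link_le_sum fun y hy w hw he => ?_)
        rw [Finset.insert_comm] at he
        have := hpal z y w he (hAord 0 1 (by norm_num) (by norm_num) z hz y (hY hy))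
          (hAord 1 3 (by norm_num) (by norm_num) y (hY hy) w (hW hw))
        rw [hzY y hy, hzW w hw] at this
        exact ⟨_, mem_filter.mpr ⟨this, rfl, rfl⟩, rfl⟩
      · obtain ⟨z, hz, hzY, hzW, hle⟩ := hlink 2 b hb a ha
        refine hle.trans (link_le_sum fun y hy w hw he => ?_)
        rw [Finset.pair_comm z w] at he
        have := hpal y w z he (hAord 1 3 (by norm_num) (by norm_num) y (hY hy) w (hW hw))
          (hAord 3 4 (by norm_num) (by norm_num) w (hW hw) z hz)
        rw [Finset.pair_comm y z, Finset.pair_comm w z, hzY y hy, hzW w hw] at this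
        exact ⟨_, mem_filter.mpr ⟨this, rfl, rfl⟩, rfl⟩)
  linarith

/-- Deleting `r` edges costs at most `27 r / n³` in the error term: an edge `e` accounts for at
most `|e × e × e| = 27` ordered triples. -/
lemma dense_deleteEdges {H : ThreeGraph} {d η α : ℝ} (hd : IsDenseEE H d η)
    {R : Finset (Finset ℕ)} (hR : R ⊆ H.edges) (hRc : (R.card : ℝ) ≤ α * (H.verts.card : ℝ) ^ 3) :
    IsDenseEE (H.deleteEdges R) d (η + 27 * α) := by
  intro P Q hP hQ
  have h := hd P Q hP hQ
  have hK : KEE (H.deleteEdges R) P Q = KEE H P Q := rfl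
  have hv : (H.deleteEdges R).verts = H.verts := rfl
  have hle : eEE H P Q ≤ eEE (H.deleteEdges R) P Q + R.card * 27 := by
    unfold eEE
    rw [hK]
    have hsub : ((KEE H P Q).filter fun p => ({p.1, p.2.1, p.2.2} : Finset ℕ) ∈ H.edges) ⊆
        ((KEE H P Q).filter fun p =>
          ({p.1, p.2.1, p.2.2} : Finset ℕ) ∈ (H.deleteEdges R).edges) ∪
        R.biUnion fun e => e ×ˢ (e ×ˢ e) := by
      intro p hp
      obtain ⟨h1, h2⟩ := mem_filter.mp hp
      by_cases hpR : ({p.1, p.2.1, p.2.2} : Finset ℕ) ∈ R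
      · refine mem_union_right _ (mem_biUnion.mpr ⟨_, hpR, ?_⟩)
        simp
      · exact mem_union_left _ (mem_filter.mpr ⟨h1, mem_sdiff.mpr ⟨h2, hpR⟩⟩)
    refine (card_le_card hsub).trans ((card_union_le _ _).trans (Nat.add_le_add_left ?_ _))
    refine card_biUnion_le_card_mul _ _ _ fun e he => ?_
    rw [card_product, card_product, H.edge_card e (hR he)]
  have hle' : (eEE H P Q : ℝ) ≤ eEE (H.deleteEdges R) P Q + R.card * 27 := by exact_mod_cast hle
  rw [hK, hv]
  linarith

/-- For every ν > 0 and palette 𝒫 there are α, C > 0 and N ∈ ℕ such that any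
3-graph on n ≥ N vertices which α-almost satisfies 𝒫 and is (d,η,ee)-dense has
d ≤ Λ^{ee}_𝒫 + Cη + ν. -/
theorem palette_upper_bound_almost_EE (ν : ℝ) (hν : 0 < ν) (P : Palette) :
    ∃ α C : ℝ, 0 < α ∧ 0 < C ∧ ∃ N : ℕ, ∀ H : ThreeGraph, N ≤ H.verts.card →
      AlmostSatisfies H P α → ∀ d η : ℝ, 0 ≤ d → d ≤ 1 → 0 < η →
      IsDenseEE H d η → d ≤ LambdaEE P + C * η + ν := by
  obtain ⟨η₀, hη₀, N, hcore⟩ := core (ν / 2) (by linarith) P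
  refine ⟨ν * η₀ / 54, 1 / η₀, by positivity, by positivity, N, ?_⟩
  rintro H hN ⟨R, hR, hRc, hsat⟩ d η hd0 hd1 hη hd
  have hd' := dense_deleteEdges hd hR hRc
  by_cases hle : η + 27 * (ν * η₀ / 54) ≤ η₀
  · have := hcore (H.deleteEdges R) hN hsat d _ hd' hle
    have h2 : 0 ≤ 1 / η₀ * η := by positivity
    linarith
  · -- the error term alone exceeds the trivial bound `d ≤ 1`
    have h1 : 1 / η₀ * (η + 27 * (ν * η₀ / 54)) = 1 / η₀ * η + ν / 2 := by
      field_simp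
      ring
    have h2 : 1 < 1 / η₀ * (η + 27 * (ν * η₀ / 54)) := by
      rw [one_div_mul_eq_div, lt_div_iff₀ hη₀]
      linarith
    have := LambdaEE_nonneg P
    linarith
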